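/- arXiv:1509.03452 — 4 statements merged into one kernel-verified Lean document; each statement's English description precedes it below -/
import Mathlib

section
/- Let E and F be complex Banach spaces, U ⊆ E an open set, and f : E → F a map that is continuous on U. Let Λ be a set of continuous complex-linear functionals on F (elements of F →L[ℂ] ℂ) that separates the points of F, i.e. for every x ∈ F with x ≠ 0 there exists λ ∈ Λ with λ x ≠ 0. If for every λ ∈ Λ the composite λ ∘ f is complex analytic on U, then f itself is complex analytic on U. -/
/-!
On a complex line `t ↦ x + t • h` the contour integrals of `f` over rectangles are killed by every
`l ∈ Λ`, hence vanish, and Morera's theorem makes the restriction of `f` holomorphic. Its derivative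
at `0` is linear in `h`, again because `Λ` separates points, and the Schwarz lemma bounds the
first-order remainder by a multiple of `‖h‖ ^ 2`; so `f` is Fréchet differentiable.

A differentiable map on an open set is analytic. The directional derivatives of `f` are locally
uniform limits of difference quotients, hence differentiable; applying the Cauchy estimate to
`y ↦ f (y + w) - f y - fderiv ℂ f y w`, which is `O(‖w‖ ^ 2)`, shows that `fderiv ℂ f` itself is
differentiable. By induction `f` is smooth, iterated Cauchy estimates bound the `n`-th derivative by
`M * (2 * n / R) ^ n`, and the Taylor series sums to `f` because it does so on every complex line.
-/

open Set Filter Topology Metric Asymptotics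

section Calculus

theorem exists_ball_subset_mapsTo_closedBall {X Y : Type*} [PseudoMetricSpace X]
    [PseudoMetricSpace Y] {f : X → Y} {U : Set X} {x : X} (hU : U ∈ 𝓝 x) (hf : ContinuousAt f x) :
    ∃ R > 0, ball x R ⊆ U ∧ MapsTo f (ball x R) (closedBall (f x) 1) := by
  obtain ⟨R, hR, hRU⟩ := nhds_basis_ball.mem_iff.1
    (inter_mem hU (hf.preimage_mem_nhds (closedBall_mem_nhds (f x) one_pos)))
  exact ⟨R, hR, fun y hy => (hRU hy).1, fun y hy => (hRU hy).2⟩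

variable {𝕜 E F : Type*} [NontriviallyNormedField 𝕜] [NormedAddCommGroup E] [NormedSpace 𝕜 E]
  [NormedAddCommGroup F] [NormedSpace 𝕜 F] {f : E → F} {x h : E}

theorem differentiableAt_of_linearMap_isLittleO (A : E →ₗ[𝕜] F) (hf : f =O[𝓝 x] (1 : E → ℝ))
    (hA : (fun h => f (x + h) - f x - A h) =o[𝓝 0] fun h => h) : DifferentiableAt 𝕜 f x := by
  have hshift : Tendsto (fun h => x + h) (𝓝 0) (𝓝 x) := by
    simpa using (continuous_const_add x).tendsto 0
  have hid : (fun h : E => h) =O[𝓝 0] (1 : E → ℝ) := continuousAt_id.isBigO_one ℝ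
  have hbounded : A =O[𝓝 0] (1 : E → ℝ) := by
    have := ((hf.comp_tendsto hshift).sub (isBigO_const_const (f x) one_ne_zero _)).sub
      (hA.isBigO.trans hid)
    exact this.congr_left fun h => by simp
  obtain ⟨c, hc⟩ := hbounded.bound
  obtain ⟨r, hr, hball⟩ := nhds_basis_ball.eventually_iff.1 hc
  obtain ⟨C, hC⟩ := A.bound_of_ball_bound hr c fun h hh => by simpa using hball hh
  have hderiv : HasFDerivAt f (A.mkContinuous C hC) x := by
    rw [hasFDerivAt_iff_isLittleO_nhds_zero]
    exact hA
  exact hderiv.differentiableAt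

theorem iteratedDeriv_comp_add_smul {n : ℕ} {t : 𝕜} (hf : ContDiffAt 𝕜 n f (x + t • h)) :
    iteratedDeriv n (fun s : 𝕜 => f (x + s • h)) t =
      iteratedFDeriv 𝕜 n f (x + t • h) fun _ => h := by
  induction n generalizing t with
  | zero => simp
  | succ n ih =>
    have hline : ContinuousAt (fun s : 𝕜 => x + s • h) t := by fun_prop
    have hnear : iteratedDeriv n (fun s : 𝕜 => f (x + s • h)) =ᶠ[𝓝 t]
        fun s => iteratedFDeriv 𝕜 n f (x + s • h) fun _ => h := by
      filter_upwards [hline.eventually (hf.eventually (by simp))] with s hs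
      exact ih (hs.of_le (by norm_cast; omega))
    rw [iteratedDeriv_succ, hnear.deriv_eq]
    exact ContDiffAt.deriv_fderiv_add_smul hf

theorem tendstoUniformlyOn_slope_of_norm_sub_sub_le {s : Set E} {f' : E → E →L[𝕜] F} {r C : ℝ}
    (hr : 0 < r)
    (hC : ∀ y ∈ s, ∀ h ∈ ball (0 : E) r, ‖f (y + h) - f y - f' y h‖ ≤ C * ‖h‖ ^ 2) (v : E) :
    TendstoUniformlyOn (fun (t : 𝕜) y => t⁻¹ • (f (y + t • v) - f y)) (fun y => f' y v)
      (𝓝[≠] 0) s := by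
  have hsmall : ∀ᶠ t : 𝕜 in 𝓝[≠] 0, t • v ∈ ball (0 : E) r := by
    have : Continuous fun t : 𝕜 => t • v := by fun_prop
    exact nhdsWithin_le_nhds
      (this.continuousAt.preimage_mem_nhds (by simpa using ball_mem_nhds (0 : E) hr))
  have herror : ∀ᶠ t : 𝕜 in 𝓝[≠] 0, ∀ y ∈ s,
      dist (f' y v) (t⁻¹ • (f (y + t • v) - f y)) ≤ C * ‖v‖ ^ 2 * ‖t‖ := by
    filter_upwards [hsmall, self_mem_nhdsWithin] with t ht ht0 y hy
    have htpos : 0 < ‖t‖ := norm_pos_iff.2 ht0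
    calc dist (f' y v) (t⁻¹ • (f (y + t • v) - f y))
        = ‖t‖⁻¹ * ‖f (y + t • v) - f y - f' y (t • v)‖ := by
          rw [dist_eq_norm, ← norm_inv, ← norm_smul, smul_sub t⁻¹ (f (y + t • v) - f y),
            map_smul, inv_smul_smul₀ ht0, norm_sub_rev]
      _ ≤ ‖t‖⁻¹ * (C * ‖t • v‖ ^ 2) := by gcongr; exact hC y hy _ ht
      _ = C * ‖v‖ ^ 2 * ‖t‖ := by rw [norm_smul]; field_simp
  rw [Metric.tendstoUniformlyOn_iff]
  intro ε hε
  have hbound : Tendsto (fun t : 𝕜 => C * ‖v‖ ^ 2 * ‖t‖) (𝓝[≠] 0) (𝓝 0) := by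
    have : Continuous fun t : 𝕜 => C * ‖v‖ ^ 2 * ‖t‖ := by fun_prop
    exact tendsto_nhdsWithin_of_tendsto_nhds (by simpa using this.tendsto 0)
  filter_upwards [herror, hbound.eventually_lt_const hε] with t ht htε y hy
  exact (ht y hy).trans_lt htε

end Calculus

section Cauchy

variable {E F : Type*} [NormedAddCommGroup E] [NormedSpace ℂ E]
  [NormedAddCommGroup F] [NormedSpace ℂ F] {f : E → F} {U : Set E} {c x z h : E} {R M : ℝ}

theorem norm_fderiv_le_of_forall_mem_ball_norm_le (hf : DifferentiableOn ℂ f (ball c R))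
    (hM : ∀ y ∈ ball c R, ‖f y‖ ≤ M) (hR : 0 < R) : ‖fderiv ℂ f c‖ ≤ 2 * M / R := by
  refine Complex.norm_fderiv_le_div_of_mapsTo_ball hf (fun y hy => ?_) hR
  rw [mem_closedBall, dist_eq_norm]
  linarith [norm_sub_le (f y) (f c), hM y hy, hM c (mem_ball_self hR)]

theorem norm_sub_sub_fderiv_le_of_mapsTo_ball (hf : DifferentiableOn ℂ f (ball c R))
    (hM : MapsTo f (ball c R) (closedBall (f c) M)) (hz : z ∈ ball c R) :
    ‖f z - f c - fderiv ℂ f c (z - c)‖ ≤ 2 * M * (dist z c / R) ^ 2 := by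
  have hR : 0 < R := pos_of_mem_ball hz
  set L := fderiv ℂ f c
  have hL : ‖L‖ ≤ M / R := Complex.norm_fderiv_le_div_of_mapsTo_ball hf hM hR
  have hmaps : MapsTo (fun w => f w - L (w - c)) (ball c R)
      (closedBall (f c - L (c - c)) (2 * M)) := by
    intro w hw
    have hfw : ‖f w - f c‖ ≤ M := mem_closedBall_iff_norm.1 (hM hw)
    have hLw : ‖L (w - c)‖ ≤ M := calc
      ‖L (w - c)‖ ≤ M / R * R :=
        L.le_of_opNorm_le_of_le hL (mem_ball_iff_norm.1 hw).le
      _ = M := div_mul_cancel₀ M hR.ne'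
    rw [mem_closedBall_iff_norm, sub_self, map_zero, sub_zero, sub_right_comm]
    linarith [norm_sub_le (f w - f c) (L (w - c))]
  have hlittleO : (fun w => f w - L (w - c) - (f c - L (c - c))) =o[𝓝 c]
      fun w => ‖w - c‖ ^ 1 := by
    have hc := (hf.differentiableAt (ball_mem_nhds c hR)).hasFDerivAt.isLittleO.norm_right
    exact hc.congr (fun w => by simp only [sub_self, map_zero]; abel) fun w => (pow_one _).symm
  have hschwarz := Complex.dist_le_mul_div_pow_of_mapsTo_ball_of_isLittleO
    (hf.sub (by fun_prop)) hmaps hlittleO hz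
  rw [dist_eq_norm] at hschwarz
  simpa [sub_right_comm] using hschwarz

theorem norm_sub_sub_lineDeriv_le_of_mapsTo_ball
    (hf : DifferentiableOn ℂ (fun t : ℂ => f (x + t • h)) ((fun t : ℂ => x + t • h) ⁻¹' ball x R))
    (hM : MapsTo f (ball x R) (closedBall (f x) M)) (hh : ‖h‖ < R) :
    ‖f (x + h) - f x - lineDeriv ℂ f x h‖ ≤ 2 * M * (‖h‖ / R) ^ 2 := by
  rcases eq_or_ne h 0 with rfl | hne
  · simp [lineDeriv_zero]
  have hpos : 0 < ‖h‖ := norm_pos_iff.2 hne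
  have hpre : (fun t : ℂ => x + t • h) ⁻¹' ball x R = ball 0 (R / ‖h‖) := by
    ext t
    simp [norm_smul, lt_div_iff₀ hpos]
  rw [hpre] at hf
  have hmaps : MapsTo (fun t : ℂ => f (x + t • h)) (ball 0 (R / ‖h‖))
      (closedBall (f (x + (0 : ℂ) • h)) M) := by
    rw [← hpre, zero_smul, add_zero]
    exact fun t ht => hM ht
  have hone : (1 : ℂ) ∈ ball 0 (R / ‖h‖) := by simpa [lt_div_iff₀ hpos] using hh
  simpa [lineDeriv] using norm_sub_sub_fderiv_le_of_mapsTo_ball hf hmaps hone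

theorem exists_forall_mem_ball_norm_sub_sub_fderiv_le (hU : IsOpen U)
    (hf : DifferentiableOn ℂ f U) (hx : x ∈ U) :
    ∃ r > 0, ∃ C, ∀ y ∈ ball x r, ball y r ⊆ U ∧
      ∀ h ∈ ball (0 : E) r, ‖f (y + h) - f y - fderiv ℂ f y h‖ ≤ C * ‖h‖ ^ 2 := by
  obtain ⟨R, hR, hRU, hmaps⟩ := exists_ball_subset_mapsTo_closedBall (hU.mem_nhds hx)
    (hf.continuousOn.continuousAt (hU.mem_nhds hx))
  refine ⟨R / 2, half_pos hR, 2 * 2 / (R / 2) ^ 2, fun y hy => ?_⟩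
  have hsub : ball y (R / 2) ⊆ ball x R := ball_subset_ball' (by linarith [mem_ball.1 hy])
  have hmaps_y : MapsTo f (ball y (R / 2)) (closedBall (f y) 2) := fun z hz => by
    have hfz := mem_closedBall.1 (hmaps (hsub hz))
    have hfy := mem_closedBall.1 (hmaps (hsub (mem_ball_self (half_pos hR))))
    rw [mem_closedBall]
    linarith [dist_triangle_right (f z) (f y) (f x)]
  refine ⟨hsub.trans hRU, fun h hh => ?_⟩
  have hyh : y + h ∈ ball y (R / 2) := by simpa using hh
  have := norm_sub_sub_fderiv_le_of_mapsTo_ball (hf.mono (hsub.trans hRU)) hmaps_y hyh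
  rw [add_sub_cancel_left, dist_self_add_left, div_pow] at this
  exact this.trans_eq (by ring)

theorem isBigO_one_fderiv (hU : IsOpen U) (hf : DifferentiableOn ℂ f U) (hx : x ∈ U) :
    fderiv ℂ f =O[𝓝 x] (1 : E → ℝ) := by
  obtain ⟨R, hR, hRU, hmaps⟩ := exists_ball_subset_mapsTo_closedBall (hU.mem_nhds hx)
    (hf.continuousOn.continuousAt (hU.mem_nhds hx))
  refine IsBigO.of_bound (2 * (‖f x‖ + 1) / (R / 2)) ?_
  filter_upwards [ball_mem_nhds x (half_pos hR)] with y hy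
  have hsub : ball y (R / 2) ⊆ ball x R := ball_subset_ball' (by linarith [mem_ball.1 hy])
  simpa using norm_fderiv_le_of_forall_mem_ball_norm_le (hf.mono (hsub.trans hRU))
    (fun z hz => norm_le_of_mem_closedBall (hmaps (hsub hz))) (half_pos hR)

end Cauchy

section Weierstrass

variable {ι E F : Type*} [NormedAddCommGroup E] [NormedSpace ℂ E]
  [NormedAddCommGroup F] [NormedSpace ℂ F] {φ : Filter ι} {G : ι → E → F} {g : E → F}
  {U : Set E} {x : E} {r : ℝ}

theorem uniformCauchySeqOn_fderiv_ball (hr : 0 < r) (hcauchy : UniformCauchySeqOn G φ U)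
    (hG : ∀ᶠ n in φ, DifferentiableOn ℂ (G n) U) (hU : ball x (2 * r) ⊆ U) :
    UniformCauchySeqOn (fun n => fderiv ℂ (G n)) φ (ball x r) := by
  intro u hu
  obtain ⟨ε, hε, hεu⟩ := Metric.mem_uniformity_dist.1 hu
  have hδ : 0 < ε * r / 4 := by positivity
  filter_upwards [hcauchy _ (Metric.dist_mem_uniformity hδ), hG.prod_mk hG]
    with ⟨m, n⟩ hclose ⟨hm, hn⟩ y hy
  have hsub : ball y r ⊆ U := (ball_subset_ball' (by linarith [mem_ball.1 hy])).trans hU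
  have hU_nhds : U ∈ 𝓝 y := mem_of_superset (ball_mem_nhds y hr) hsub
  have hcauchy_estimate : ‖fderiv ℂ (G m - G n) y‖ ≤ 2 * (ε * r / 4) / r :=
    norm_fderiv_le_of_forall_mem_ball_norm_le ((hm.sub hn).mono hsub)
      (fun z hz => by simpa [dist_eq_norm] using (hclose z (hsub hz)).le) hr
  rw [fderiv_sub (hm.differentiableAt hU_nhds) (hn.differentiableAt hU_nhds), ← dist_eq_norm]
    at hcauchy_estimate
  refine hεu (hcauchy_estimate.trans_lt ?_)
  calc 2 * (ε * r / 4) / r = ε / 2 := by field_simp; norm_num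
    _ < ε := half_lt_self hε

theorem differentiableOn_of_tendstoUniformlyOn [CompleteSpace F] [NeBot φ] (hU : IsOpen U)
    (hg : TendstoUniformlyOn G g φ U) (hG : ∀ᶠ n in φ, DifferentiableOn ℂ (G n) U) :
    DifferentiableOn ℂ g U := by
  intro x hx
  obtain ⟨R, hR, hRU⟩ := Metric.isOpen_iff.1 hU x hx
  have hcauchy : UniformCauchySeqOn (fun n => fderiv ℂ (G n)) φ (ball x (R / 2)) :=
    uniformCauchySeqOn_fderiv_ball (half_pos hR) hg.uniformCauchySeqOn hG
      (by rwa [mul_div_cancel₀ R two_ne_zero])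
  have hlim : ∀ y ∈ ball x (R / 2), ∃ L, Tendsto (fun n => fderiv ℂ (G n) y) φ (𝓝 L) :=
    fun y hy => CompleteSpace.complete (hcauchy.cauchy_map hy)
  choose! g' hg' using hlim
  have hderiv : HasFDerivAt g (g' x) x := by
    refine hasFDerivAt_of_tendstoUniformlyOnFilter (f := G) (l := φ) (f' := fun n => fderiv ℂ (G n))
      ?_ ?_ ?_
    · exact (hcauchy.tendstoUniformlyOn_of_tendsto hg').tendstoUniformlyOnFilter.mono_right
        (le_principal_iff.2 (ball_mem_nhds x (half_pos hR)))
    · filter_upwards [hG.prod_mk (hU.mem_nhds hx)] with ⟨n, y⟩ ⟨hn, hy⟩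
      exact (hn.differentiableAt (hU.mem_nhds hy)).hasFDerivAt
    · filter_upwards [hU.mem_nhds hx] with y hy using hg.tendsto_at hy
  exact hderiv.differentiableAt.differentiableWithinAt

end Weierstrass

section HigherDerivatives

variable {E F : Type*} [NormedAddCommGroup E] [NormedSpace ℂ E]
  [NormedAddCommGroup F] [NormedSpace ℂ F] [CompleteSpace F] {f : E → F} {U : Set E} {x : E}

theorem differentiableOn_fderiv_apply (hU : IsOpen U) (hf : DifferentiableOn ℂ f U) (v : E) :
    DifferentiableOn ℂ (fun y => fderiv ℂ f y v) U := by
  intro x hx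
  obtain ⟨r, hr, C, hC⟩ := exists_forall_mem_ball_norm_sub_sub_fderiv_le hU hf hx
  have hslope : ∀ᶠ t : ℂ in 𝓝[≠] 0,
      DifferentiableOn ℂ (fun y => t⁻¹ • (f (y + t • v) - f y)) (ball x r) := by
    have hcont : Continuous fun t : ℂ => t • v := by fun_prop
    have hsmall : ∀ᶠ t : ℂ in 𝓝 0, t • v ∈ ball (0 : E) r :=
      hcont.continuousAt.preimage_mem_nhds (by simpa using ball_mem_nhds (0 : E) hr)
    filter_upwards [nhdsWithin_le_nhds hsmall] with t ht
    have htranslate : DifferentiableOn ℂ (fun y => f (y + t • v)) (ball x r) :=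
      hf.comp (by fun_prop) fun y hy => (hC y hy).1 (by simpa using ht)
    exact (htranslate.sub (hf.mono fun y hy => (hC y hy).1 (mem_ball_self hr))).const_smul t⁻¹
  have hlim : TendstoUniformlyOn (fun (t : ℂ) y => t⁻¹ • (f (y + t • v) - f y))
      (fun y => fderiv ℂ f y v) (𝓝[≠] 0) (ball x r) :=
    tendstoUniformlyOn_slope_of_norm_sub_sub_le hr (fun y hy => (hC y hy).2) v
  exact ((differentiableOn_of_tendstoUniformlyOn isOpen_ball hlim hslope).differentiableAt
    (ball_mem_nhds x hr)).differentiableWithinAt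

theorem isBigO_fderiv_add_sub_sub_fderiv_fderiv_apply (hU : IsOpen U)
    (hf : DifferentiableOn ℂ f U) (hx : x ∈ U) :
    (fun w => fderiv ℂ f (x + w) - fderiv ℂ f x - fderiv ℂ (fun y => fderiv ℂ f y w) x)
      =O[𝓝 0] fun w => ‖w‖ ^ 2 := by
  obtain ⟨r, hr, C, hC⟩ := exists_forall_mem_ball_norm_sub_sub_fderiv_le hU hf hx
  refine IsBigO.of_bound (2 * C / r) ?_
  filter_upwards [ball_mem_nhds (0 : E) hr] with w hw
  have htranslate : DifferentiableOn ℂ (fun y => f (y + w)) (ball x r) :=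
    hf.comp (by fun_prop) fun y hy => (hC y hy).1 (by simpa using hw)
  have hself : DifferentiableOn ℂ f (ball x r) :=
    hf.mono fun y hy => (hC y hy).1 (mem_ball_self hr)
  have hderiv : DifferentiableOn ℂ (fun y => fderiv ℂ f y w) (ball x r) :=
    differentiableOn_fderiv_apply isOpen_ball hself w
  have hball : ball x r ∈ 𝓝 x := ball_mem_nhds x hr
  have hremainder : fderiv ℂ (fun y => f (y + w) - f y - fderiv ℂ f y w) x =
      fderiv ℂ f (x + w) - fderiv ℂ f x - fderiv ℂ (fun y => fderiv ℂ f y w) x := by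
    rw [fderiv_fun_sub ((htranslate.fun_sub hself).differentiableAt hball)
      (hderiv.differentiableAt hball), fderiv_fun_sub (htranslate.differentiableAt hball)
      (hself.differentiableAt hball), fderiv_comp_add_right]
  rw [← hremainder, norm_pow, norm_norm]
  exact (norm_fderiv_le_of_forall_mem_ball_norm_le ((htranslate.sub hself).sub hderiv)
    (fun y hy => (hC y hy).2 w hw) hr).trans_eq (by ring)

theorem differentiableOn_fderiv (hU : IsOpen U) (hf : DifferentiableOn ℂ f U) :
    DifferentiableOn ℂ (fderiv ℂ f) U := by
  intro x hx
  have hDf : ∀ w, DifferentiableAt ℂ (fun y => fderiv ℂ f y w) x := fun w =>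
    (differentiableOn_fderiv_apply hU hf w).differentiableAt (hU.mem_nhds hx)
  let A : E →ₗ[ℂ] E →L[ℂ] F :=
    { toFun := fun w => fderiv ℂ (fun y => fderiv ℂ f y w) x
      map_add' := fun v w => by simpa using fderiv_fun_add (hDf v) (hDf w)
      map_smul' := fun a w => by simpa using fderiv_fun_const_smul (hDf w) a }
  have hA : (fun w => fderiv ℂ f (x + w) - fderiv ℂ f x - A w) =o[𝓝 0] fun w => w :=
    (isBigO_fderiv_add_sub_sub_fderiv_fderiv_apply hU hf hx).trans_isLittleO
      (isLittleO_norm_pow_id one_lt_two)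
  exact (differentiableAt_of_linearMap_isLittleO A
    (isBigO_one_fderiv hU hf hx) hA).differentiableWithinAt

theorem differentiableOn_iteratedFDeriv (hU : IsOpen U) (hf : DifferentiableOn ℂ f U) (n : ℕ) :
    DifferentiableOn ℂ (iteratedFDeriv ℂ n f) U := by
  induction n with
  | zero => rwa [iteratedFDeriv_zero_eq_comp, LinearIsometryEquiv.comp_differentiableOn_iff]
  | succ n ih =>
    let uncurry : (E →L[ℂ] E [×n]→L[ℂ] F) →L[ℂ] E [×(n + 1)]→L[ℂ] F :=
      (continuousMultilinearCurryLeftEquiv ℂ (fun _ : Fin (n + 1) => E) F).symm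
    rw [iteratedFDeriv_succ_eq_comp_left]
    exact uncurry.differentiable.comp_differentiableOn (differentiableOn_fderiv hU ih)

theorem contDiffAt_of_differentiableOn (hU : IsOpen U) (hf : DifferentiableOn ℂ f U) (hx : x ∈ U)
    (n : ℕ) : ContDiffAt ℂ n f x := by
  have hcont : ContDiffOn ℂ (n : ℕ∞) f U := contDiffOn_of_differentiableOn fun m _ =>
    (differentiableOn_iteratedFDeriv hU hf m).congr (iteratedFDerivWithin_of_isOpen m hU)
  exact hcont.contDiffAt (hU.mem_nhds hx)

end HigherDerivatives

section Taylor

/-- The Taylor series of `f` at `x` as a formal multilinear series. Unlike `ftaylorSeries`, it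
carries the factors `1 / n!`, so that it can serve as a power series expansion of `f`. -/
noncomputable def taylorMultilinearSeries (𝕜 : Type*) {E F : Type*} [NontriviallyNormedField 𝕜]
    [NormedAddCommGroup E] [NormedSpace 𝕜 E] [NormedAddCommGroup F] [NormedSpace 𝕜 F]
    (f : E → F) (x : E) : FormalMultilinearSeries 𝕜 E F :=
  fun n => (n.factorial : 𝕜)⁻¹ • iteratedFDeriv 𝕜 n f x

variable {E F : Type*} [NormedAddCommGroup E] [NormedSpace ℂ E]
  [NormedAddCommGroup F] [NormedSpace ℂ F] [CompleteSpace F] {f : E → F} {U : Set E} {x y h : E}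
  {R M δ : ℝ}

-- Each of the `n` Cauchy estimates costs a shrinking of the radius by `δ`.
theorem norm_iteratedFDeriv_le_of_dist_add_le (hf : DifferentiableOn ℂ f (ball x R))
    (hM : ∀ z ∈ ball x R, ‖f z‖ ≤ M) (hδ : 0 < δ) (n : ℕ) (hy : y ∈ ball x R)
    (hn : dist y x + n * δ ≤ R) : ‖iteratedFDeriv ℂ n f y‖ ≤ M * (2 / δ) ^ n := by
  induction n generalizing y with
  | zero => simpa using hM y hy
  | succ n ih =>
    push_cast at hn
    have hnδ : 0 ≤ n * δ := by positivity
    have hsub : ball y δ ⊆ ball x R := ball_subset_ball' (by linarith)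
    have hbound : ∀ z ∈ ball y δ, ‖iteratedFDeriv ℂ n f z‖ ≤ M * (2 / δ) ^ n := fun z hz =>
      ih (hsub hz) (by linarith [mem_ball.1 hz, dist_triangle z y x])
    calc ‖iteratedFDeriv ℂ (n + 1) f y‖ = ‖fderiv ℂ (iteratedFDeriv ℂ n f) y‖ :=
          norm_fderiv_iteratedFDeriv.symm
      _ ≤ 2 * (M * (2 / δ) ^ n) / δ := norm_fderiv_le_of_forall_mem_ball_norm_le
          ((differentiableOn_iteratedFDeriv isOpen_ball hf n).mono hsub) hbound hδ
      _ = M * (2 / δ) ^ (n + 1) := by ring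

theorem norm_iteratedFDeriv_le_of_forall_mem_ball_norm_le (hf : DifferentiableOn ℂ f (ball x R))
    (hM : ∀ z ∈ ball x R, ‖f z‖ ≤ M) (hR : 0 < R) (n : ℕ) :
    ‖iteratedFDeriv ℂ n f x‖ ≤ M * (2 * n / R) ^ n := by
  have hx : x ∈ ball x R := mem_ball_self hR
  rcases n.eq_zero_or_pos with rfl | hn
  · simpa using hM x hx
  have hn_pos : (0 : ℝ) < n := by exact_mod_cast hn
  have hδ : dist x x + n * (R / n) ≤ R := by
    rw [dist_self, zero_add, mul_div_cancel₀ R hn_pos.ne']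
  refine (norm_iteratedFDeriv_le_of_dist_add_le hf hM (div_pos hR hn_pos) n hx hδ).trans_eq ?_
  rw [div_div_eq_mul_div]

theorem le_radius_taylorMultilinearSeries (hf : DifferentiableOn ℂ f (ball x R))
    (hM : ∀ z ∈ ball x R, ‖f z‖ ≤ M) (hR : 0 < R) :
    ENNReal.ofReal (R / (2 * Real.exp 1)) ≤ (taylorMultilinearSeries ℂ f x).radius := by
  have hM0 : 0 ≤ M := (norm_nonneg _).trans (hM x (mem_ball_self hR))
  refine FormalMultilinearSeries.le_radius_of_bound _ M fun n => ?_
  have hfactorial : (n : ℝ) ^ n / n.factorial ≤ Real.exp 1 ^ n := by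
    simpa using Real.pow_div_factorial_le_exp (n : ℝ) n.cast_nonneg n
  rw [Real.coe_toNNReal _ (by positivity)]
  calc ‖taylorMultilinearSeries ℂ f x n‖ * (R / (2 * Real.exp 1)) ^ n
      = (n.factorial : ℝ)⁻¹ * ‖iteratedFDeriv ℂ n f x‖ * (R / (2 * Real.exp 1)) ^ n := by
        rw [taylorMultilinearSeries, norm_smul, norm_inv, Complex.norm_natCast]
    _ ≤ (n.factorial : ℝ)⁻¹ * (M * (2 * n / R) ^ n) * (R / (2 * Real.exp 1)) ^ n := by
        gcongr
        exact norm_iteratedFDeriv_le_of_forall_mem_ball_norm_le hf hM hR n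
    _ = M * ((n : ℝ) ^ n / n.factorial / Real.exp 1 ^ n) := by
        simp only [div_pow, mul_pow]
        field_simp
    _ ≤ M * 1 := by
        gcongr
        exact (div_le_one (by positivity)).2 hfactorial
    _ = M := mul_one M

theorem hasSum_taylorMultilinearSeries (hf : DifferentiableOn ℂ f (ball x R)) (hh : ‖h‖ < R) :
    HasSum (fun n => taylorMultilinearSeries ℂ f x n fun _ => h) (f (x + h)) := by
  obtain ⟨q, hhq, hqR⟩ := exists_between hh
  have hq : 0 < q := (norm_nonneg h).trans_lt hhq
  have hR : 0 < R := hq.trans hqR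
  have hline : MapsTo (fun t : ℂ => x + t • h) (ball 0 (R / q)) (ball x R) := fun t ht => by
    rw [mem_ball_zero_iff] at ht
    rw [mem_ball_iff_norm, add_sub_cancel_left, norm_smul]
    calc ‖t‖ * ‖h‖ ≤ ‖t‖ * q := by gcongr
      _ < R / q * q := by gcongr
      _ = R := div_mul_cancel₀ R hq.ne'
  have hslice : DifferentiableOn ℂ (fun t : ℂ => f (x + t • h)) (ball 0 (R / q)) :=
    hf.comp (by fun_prop) hline
  have hone : (1 : ℂ) ∈ ball 0 (R / q) := by simpa [one_lt_div hq] using hqR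
  have hsum := Complex.hasSum_taylorSeries_on_ball hslice hone
  simp only [one_smul, sub_zero, one_pow] at hsum
  refine hsum.congr_fun fun n => ?_
  have hcontDiff : ContDiffAt ℂ n f (x + (0 : ℂ) • h) :=
    contDiffAt_of_differentiableOn isOpen_ball hf (hline (mem_ball_self (div_pos hR hq))) n
  rw [iteratedDeriv_comp_add_smul hcontDiff]
  simp [taylorMultilinearSeries]

theorem hasFPowerSeriesOnBall_taylorMultilinearSeries (hf : DifferentiableOn ℂ f (ball x R))
    (hM : ∀ z ∈ ball x R, ‖f z‖ ≤ M) (hR : 0 < R) :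
    HasFPowerSeriesOnBall f (taylorMultilinearSeries ℂ f x) x
      (ENNReal.ofReal (R / (2 * Real.exp 1))) where
  r_le := le_radius_taylorMultilinearSeries hf hM hR
  r_pos := ENNReal.ofReal_pos.2 (by positivity)
  hasSum {h} hh := by
    have hlt : ‖h‖ < R / (2 * Real.exp 1) := by simpa [Metric.eball_ofReal] using hh
    refine hasSum_taylorMultilinearSeries hf (hlt.trans_le ?_)
    exact div_le_self hR.le (by linarith [Real.add_one_le_exp 1])

theorem analyticOnNhd_of_differentiableOn (hU : IsOpen U) (hf : DifferentiableOn ℂ f U) :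
    AnalyticOnNhd ℂ f U := by
  intro x hx
  obtain ⟨R, hR, hRU, hmaps⟩ := exists_ball_subset_mapsTo_closedBall (hU.mem_nhds hx)
    (hf.continuousOn.continuousAt (hU.mem_nhds hx))
  exact (hasFPowerSeriesOnBall_taylorMultilinearSeries (hf.mono hRU)
    (fun y hy => norm_le_of_mem_closedBall (hmaps hy)) hR).analyticAt

end Taylor

section Separation

theorem eq_of_forall_mem_apply_eq {F G H : Type*} [AddGroup F] [AddGroup G] [FunLike H F G]
    [AddMonoidHomClass H F G] {Λ : Set H}
    (hsep : ∀ x : F, x ≠ 0 → ∃ l ∈ Λ, l x ≠ 0) {x y : F} (hxy : ∀ l ∈ Λ, l x = l y) : x = y := by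
  by_contra hne
  obtain ⟨l, hl, hlxy⟩ := hsep (x - y) (sub_ne_zero.2 hne)
  exact hlxy (by rw [map_sub, hxy l hl, sub_self])

variable {E F : Type*} [NormedAddCommGroup E] [NormedSpace ℂ E]
  [NormedAddCommGroup F] [NormedSpace ℂ F] [CompleteSpace F] {Λ : Set (F →L[ℂ] ℂ)}

theorem clm_apply_wedgeIntegral {G : Type*} [NormedAddCommGroup G] [NormedSpace ℂ G]
    [CompleteSpace G] (l : F →L[ℂ] G) {g : ℂ → F} {z w : ℂ}
    (hg : ContinuousOn g (Complex.Rectangle z w)) :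
    l (Complex.wedgeIntegral z w g) = Complex.wedgeIntegral z w fun t => l (g t) := by
  have hhorizontal : IntervalIntegrable (fun s : ℝ => g (s + z.im * Complex.I))
      MeasureTheory.volume z.re w.re := by
    refine (hg.comp (by fun_prop) fun s hs => ?_).intervalIntegrable
    simpa [Complex.Rectangle, Complex.mem_reProdIm] using hs
  have hvertical : IntervalIntegrable (fun s : ℝ => g (w.re + s * Complex.I))
      MeasureTheory.volume z.im w.im := by
    refine (hg.comp (by fun_prop) fun s hs => ?_).intervalIntegrable
    simpa [Complex.Rectangle, Complex.mem_reProdIm] using hs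
  simp only [Complex.wedgeIntegral, map_add, map_smul]
  rw [l.intervalIntegral_comp_comm hhorizontal, l.intervalIntegral_comp_comm hvertical]

theorem isConservativeOn_of_separating_functionals {V : Set ℂ} {g : ℂ → F}
    (hg : ContinuousOn g V) (hsep : ∀ x : F, x ≠ 0 → ∃ l ∈ Λ, l x ≠ 0)
    (hdiff : ∀ l ∈ Λ, DifferentiableOn ℂ (fun t => l (g t)) V) : Complex.IsConservativeOn g V := by
  intro z w hzw
  refine eq_of_forall_mem_apply_eq hsep fun l hl => ?_
  have hwz : Complex.Rectangle w z ⊆ V := by rwa [Complex.Rectangle, uIcc_comm w.re, uIcc_comm w.im]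
  rw [map_neg, clm_apply_wedgeIntegral l (hg.mono hzw), clm_apply_wedgeIntegral l (hg.mono hwz)]
  exact (hdiff l hl).isConservativeOn z w hzw

theorem differentiableOn_complex_of_separating_functionals {V : Set ℂ} {g : ℂ → F} (hV : IsOpen V)
    (hg : ContinuousOn g V) (hsep : ∀ x : F, x ≠ 0 → ∃ l ∈ Λ, l x ≠ 0)
    (hdiff : ∀ l ∈ Λ, DifferentiableOn ℂ (fun t => l (g t)) V) : DifferentiableOn ℂ g V :=
  (Complex.isConservativeOn_and_continuousOn_iff_isDifferentiableOn hV).1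
    ⟨isConservativeOn_of_separating_functionals hg hsep hdiff, hg⟩

variable {U : Set E} {f : E → F} {x : E}

theorem differentiableOn_comp_add_smul_of_separating_functionals (hU : IsOpen U)
    (hf : ContinuousOn f U) (hsep : ∀ x : F, x ≠ 0 → ∃ l ∈ Λ, l x ≠ 0)
    (hdiff : ∀ l ∈ Λ, DifferentiableOn ℂ (fun y => l (f y)) U) (x h : E) :
    DifferentiableOn ℂ (fun t : ℂ => f (x + t • h)) ((fun t : ℂ => x + t • h) ⁻¹' U) := by
  have hline : Differentiable ℂ fun t : ℂ => x + t • h := by fun_prop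
  exact differentiableOn_complex_of_separating_functionals (hU.preimage hline.continuous)
    (hf.comp hline.continuous.continuousOn fun _ ht => ht) hsep
    fun l hl => (hdiff l hl).comp hline.differentiableOn fun _ ht => ht

theorem exists_linearMap_eq_lineDeriv_of_separating_functionals (hU : IsOpen U)
    (hf : ContinuousOn f U) (hsep : ∀ x : F, x ≠ 0 → ∃ l ∈ Λ, l x ≠ 0)
    (hdiff : ∀ l ∈ Λ, DifferentiableOn ℂ (fun y => l (f y)) U) (hx : x ∈ U) :
    ∃ A : E →ₗ[ℂ] F, ∀ h, A h = lineDeriv ℂ f x h := by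
  have happly : ∀ l ∈ Λ, ∀ h, l (lineDeriv ℂ f x h) = fderiv ℂ (fun y => l (f y)) x h := by
    intro l hl h
    have hslice : DifferentiableAt ℂ (fun t : ℂ => f (x + t • h)) 0 := by
      have hline : Continuous fun t : ℂ => x + t • h := by fun_prop
      exact (differentiableOn_comp_add_smul_of_separating_functionals hU hf hsep hdiff x
        h).differentiableAt (hline.continuousAt.preimage_mem_nhds
          (by simpa using hU.mem_nhds hx))
    have hderiv : HasLineDerivAt ℂ (fun y => l (f y)) (l (lineDeriv ℂ f x h)) x h :=
      l.hasFDerivAt.comp_hasDerivAt 0 hslice.hasDerivAt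
    rw [← hderiv.lineDeriv]
    exact ((hdiff l hl).differentiableAt (hU.mem_nhds hx)).lineDeriv_eq_fderiv
  refine ⟨{ toFun := lineDeriv ℂ f x, map_add' := fun v w => ?_, map_smul' := fun a w => ?_ },
    fun _ => rfl⟩
  all_goals
    refine eq_of_forall_mem_apply_eq hsep fun l hl => ?_
    simp only [map_add, map_smul, RingHom.id_apply, happly l hl]

theorem differentiableOn_of_separating_functionals (hU : IsOpen U)
    (hf : ContinuousOn f U) (hsep : ∀ x : F, x ≠ 0 → ∃ l ∈ Λ, l x ≠ 0)
    (hdiff : ∀ l ∈ Λ, DifferentiableOn ℂ (fun y => l (f y)) U) : DifferentiableOn ℂ f U := by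
  intro x hx
  have hcont : ContinuousAt f x := hf.continuousAt (hU.mem_nhds hx)
  obtain ⟨A, hA⟩ := exists_linearMap_eq_lineDeriv_of_separating_functionals hU hf hsep hdiff hx
  obtain ⟨R, hR, hRU, hmaps⟩ := exists_ball_subset_mapsTo_closedBall (hU.mem_nhds hx) hcont
  have hquadratic : (fun h => f (x + h) - f x - A h) =O[𝓝 0] fun h => ‖h‖ ^ 2 := by
    refine IsBigO.of_bound (2 * 1 / R ^ 2) ?_
    filter_upwards [ball_mem_nhds (0 : E) hR] with h hh
    have hslice := (differentiableOn_comp_add_smul_of_separating_functionals hU hf hsep hdiff x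
      h).mono (preimage_mono hRU)
    rw [hA, norm_pow, norm_norm]
    exact (norm_sub_sub_lineDeriv_le_of_mapsTo_ball hslice hmaps
      (mem_ball_zero_iff.1 hh)).trans_eq (by ring)
  exact (differentiableAt_of_linearMap_isLittleO A (hcont.isBigO_one ℝ)
    (hquadratic.trans_isLittleO (isLittleO_norm_pow_id one_lt_two))).differentiableWithinAt

end Separation

theorem analyticOnNhd_of_separating_functionals_general
    {E F : Type*} [NormedAddCommGroup E] [NormedSpace ℂ E]
    [NormedAddCommGroup F] [NormedSpace ℂ F] [CompleteSpace F]
    {U : Set E} (hU : IsOpen U) {f : E → F} (hf : ContinuousOn f U) {Λ : Set (F →L[ℂ] ℂ)}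
    (hsep : ∀ x : F, x ≠ 0 → ∃ l ∈ Λ, l x ≠ 0)
    (hdiff : ∀ l ∈ Λ, DifferentiableOn ℂ (fun x => l (f x)) U) :
    AnalyticOnNhd ℂ f U :=
  analyticOnNhd_of_differentiableOn hU
    (differentiableOn_of_separating_functionals hU hf hsep hdiff)

theorem analyticOnNhd_of_separating_functionals
    {E F : Type*} [NormedAddCommGroup E] [NormedSpace ℂ E] [CompleteSpace E]
    [NormedAddCommGroup F] [NormedSpace ℂ F] [CompleteSpace F]
    {U : Set E} (hU : IsOpen U) (f : E → F) (hf : ContinuousOn f U)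
    (Λ : Set (F →L[ℂ] ℂ))
    (hsep : ∀ x : F, x ≠ 0 → ∃ l ∈ Λ, l x ≠ 0)
    (hana : ∀ l ∈ Λ, AnalyticOnNhd ℂ (fun x => l (f x)) U) :
    AnalyticOnNhd ℂ f U :=
  analyticOnNhd_of_separating_functionals_general hU hf hsep fun l hl =>
    (hana l hl).differentiableOn
end

section
/- Let ω, ω' : ℕ → ℝ be weights with ω n > 0 and ω' n > 0 for all n, and suppose ω' n / ω n → 0 as n → ∞. Let (a_j)_{j ∈ ℕ} be a sequence of functions a_j : ℕ → ℝ satisfying |a_j n| · ω n ≤ 1 for all j and n. Then there exists a strictly increasing φ : ℕ → ℕ such that the subsequence (a_{φ(k)}) is uniformly Cauchy for the ω'-weighted supremum norm: for every δ > 0 there is N such that for all k, l ≥ N and all n ∈ ℕ, |a_{φ(k)} n − a_{φ(l)} n| · ω' n ≤ δ. -/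
/-!
Multiplying by `ω'` turns the weighted supremum norm into the plain one, and the functions
`ω' • a j` have a common majorant proportional to `ω' / ω`, which vanishes at infinity. By Tychonoff
the sequence `a j` has a pointwise convergent subsequence. After multiplication by `ω'` the
convergence is uniform: the majorant controls all but finitely many coordinates at once.
-/

open Filter Topology

section Dominated

variable {ι κ E : Type*} [SeminormedAddCommGroup E]

theorem tendstoUniformly_of_norm_le_of_tendsto_cofinite {l : Filter κ} {F : κ → ι → E} {f : ι → E}
    {ε : ι → ℝ} (hε : Tendsto ε cofinite (𝓝 0)) (hF : ∀ᶠ k in l, ∀ i, ‖F k i‖ ≤ ε i)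
    (hlim : ∀ i, Tendsto (F · i) l (𝓝 (f i))) : TendstoUniformly F f l := by
  rcases l.eq_or_neBot with rfl | _
  · exact fun _ _ => eventually_bot
  have hf (i : ι) : ‖f i‖ ≤ ε i := le_of_tendsto (hlim i).norm (hF.mono fun _ hk => hk i)
  refine Metric.tendstoUniformly_iff.2 fun δ hδ => ?_
  have hfinite : {i | ¬ ε i < δ / 2}.Finite := hε.eventually_lt_const (half_pos hδ)
  have hhead : ∀ᶠ k in l, ∀ i ∈ {i | ¬ ε i < δ / 2}, dist (f i) (F k i) < δ :=
    (eventually_all_finite hfinite).2 fun i _ =>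
      ((hlim i).eventually (Metric.ball_mem_nhds (f i) hδ)).mono fun _ => Metric.mem_ball'.1
  filter_upwards [hF, hhead] with k hFk hheadk i
  by_cases htail : ε i < δ / 2
  · calc dist (f i) (F k i) ≤ ‖f i‖ + ‖F k i‖ := dist_le_norm_add_norm _ _
      _ ≤ ε i + ε i := add_le_add (hf i) (hFk i)
      _ < δ := by linarith
  · exact hheadk i htail

theorem exists_subseq_tendsto_pi_of_norm_le [Countable ι] [ProperSpace E] {a : ℕ → ι → E}
    {r : ι → ℝ} (ha : ∀ j i, ‖a j i‖ ≤ r i) :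
    ∃ (b : ι → E) (φ : ℕ → ℕ), StrictMono φ ∧ Tendsto (a ∘ φ) atTop (𝓝 b) := by
  have hcompact : IsCompact (Set.univ.pi fun i => Metric.closedBall (0 : E) (r i)) :=
    isCompact_univ_pi fun i => isCompact_closedBall 0 (r i)
  obtain ⟨b, -, φ, hφ, hb⟩ :=
    hcompact.tendsto_subseq fun j i _ => mem_closedBall_zero_iff.2 (ha j i)
  exact ⟨b, φ, hφ, hb⟩

end Dominated

section Weighted

variable {ι E : Type*} [Countable ι] [SeminormedAddCommGroup E] [NormedSpace ℝ E] [ProperSpace E]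
  {ω ω' : ι → ℝ} {a : ℕ → ι → E} {C : ℝ}

theorem exists_subseq_tendstoUniformly_smul (hω : ∀ i, 0 < ω i)
    (hlim : Tendsto (fun i => ω' i / ω i) cofinite (𝓝 0)) (ha : ∀ j i, ‖a j i‖ * ω i ≤ C) :
    ∃ (b : ι → E) (φ : ℕ → ℕ), StrictMono φ ∧
      TendstoUniformly (fun k => ω' • a (φ k)) (ω' • b) atTop := by
  have hle (j : ℕ) (i : ι) : ‖a j i‖ ≤ C / ω i := (le_div_iff₀ (hω i)).2 (ha j i)
  obtain ⟨b, φ, hφ, hb⟩ := exists_subseq_tendsto_pi_of_norm_le hle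
  have hmajorant : Tendsto (fun i => |ω' i / ω i| * C) cofinite (𝓝 0) := by
    simpa using hlim.abs.mul_const C
  refine ⟨b, φ, hφ, tendstoUniformly_of_norm_le_of_tendsto_cofinite hmajorant
    (.of_forall fun k i => ?_) fun i => (tendsto_pi_nhds.1 hb i).const_smul (ω' i)⟩
  calc ‖ω' i • a (φ k) i‖ = |ω' i| * ‖a (φ k) i‖ := norm_smul _ _
    _ ≤ |ω' i| * (C / ω i) := by gcongr; exact hle _ i
    _ = |ω' i / ω i| * C := by rw [abs_div, abs_of_pos (hω i)]; ring

theorem weighted_inclusion_compact_general (hω : ∀ i, 0 < ω i) (hω' : ∀ i, 0 ≤ ω' i)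
    (hlim : Tendsto (fun i => ω' i / ω i) cofinite (𝓝 0)) (ha : ∀ j i, ‖a j i‖ * ω i ≤ C) :
    ∃ φ : ℕ → ℕ, StrictMono φ ∧ ∀ δ > (0 : ℝ), ∃ N : ℕ, ∀ k l : ℕ, N ≤ k → N ≤ l →
      ∀ i, ‖a (φ k) i - a (φ l) i‖ * ω' i ≤ δ := by
  obtain ⟨b, φ, hφ, hb⟩ := exists_subseq_tendstoUniformly_smul hω hlim ha
  have hcauchy : UniformCauchySeqOn (fun k => ω' • a (φ k)) atTop Set.univ :=
    (tendstoUniformlyOn_univ.2 hb).uniformCauchySeqOn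
  refine ⟨φ, hφ, fun δ hδ => ?_⟩
  obtain ⟨N, hN⟩ := Metric.uniformCauchySeqOn_iff.1 hcauchy δ hδ
  refine ⟨N, fun k l hk hl i => ?_⟩
  calc ‖a (φ k) i - a (φ l) i‖ * ω' i = dist (ω' i • a (φ k) i) (ω' i • a (φ l) i) := by
        rw [dist_smul₀, Real.norm_of_nonneg (hω' i), dist_eq_norm, mul_comm]
    _ ≤ δ := (hN k hk l hl i (Set.mem_univ i)).le

end Weighted

theorem weighted_inclusion_compact
    (ω ω' : ℕ → ℝ) (hω : ∀ n, 0 < ω n) (hω' : ∀ n, 0 < ω' n)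
    (hlim : Filter.Tendsto (fun n => ω' n / ω n) Filter.atTop (nhds 0))
    (a : ℕ → ℕ → ℝ) (hb : ∀ j n, |a j n| * ω n ≤ 1) :
    ∃ φ : ℕ → ℕ, StrictMono φ ∧
      ∀ δ > (0 : ℝ), ∃ N : ℕ, ∀ k l : ℕ, N ≤ k → N ≤ l →
        ∀ n : ℕ, |a (φ k) n - a (φ l) n| * ω' n ≤ δ := by
  rw [← Nat.cofinite_eq_atTop] at hlim
  exact weighted_inclusion_compact_general (a := a) hω (fun n => (hω' n).le) hlim hb
end

section
/- Let ε be a nonzero real number and η : ℕ → ℝ a sequence with η 1 = ε which satisfies, for every natural number n ≥ 2, the linear equations ∑_{k=1}^{n} (n choose (k−1)) · η k · ε^(n−k) = 0. Then for every n ≥ 1, η n = ε^n · B_{n−1}, where B_m denotes the m-th Bernoulli number. -/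
/-!
After the shift `k ↦ k + 1` the equations form a triangular linear system for `η 1, η 2, …` whose
diagonal entries are the nonzero integers `(n + 1).choose n = n + 1`, so it has at most one
solution. By homogeneity in `ε`, the defining recurrence of the Bernoulli numbers, multiplied by
`ε ^ (n + 1)`, says that `ε ^ (k + 1) * B_k` is a solution.
-/

open Finset

theorem eq_of_forall_sum_range_succ_eq {M N : Type*} [AddCommMonoid N] [IsLeftCancelAdd N]
    {T : ℕ → ℕ → M → N} (hT : ∀ n, Function.Injective (T n n)) {u v : ℕ → M}
    (h : ∀ n, ∑ k ∈ range (n + 1), T n k (u k) = ∑ k ∈ range (n + 1), T n k (v k)) :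
    u = v := by
  funext n
  induction n using Nat.strong_induction_on with
  | _ n ih =>
    have lower_terms : ∑ k ∈ range n, T n k (u k) = ∑ k ∈ range n, T n k (v k) :=
      sum_congr rfl fun k hk => by rw [ih k (mem_range.mp hk)]
    have hn := h n
    rw [sum_range_succ, sum_range_succ, lower_terms] at hn
    exact hT n (add_left_cancel hn)

theorem sum_Icc_one_eq_sum_range {M : Type*} [AddCommMonoid M] (f : ℕ → M) (n : ℕ) :
    ∑ k ∈ Icc 1 n, f k = ∑ k ∈ range n, f (k + 1) := by
  rw [range_eq_Ico, sum_Ico_add' f 0 n 1, zero_add, Ico_add_one_right_eq_Icc]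

theorem sum_choose_mul_pow_mul_bernoulli {A : Type*} [Semiring A] [Algebra ℚ A] (ε : A) (n : ℕ) :
    ∑ k ∈ range (n + 1),
        ((n + 1).choose k : A) * (ε ^ (k + 1) * algebraMap ℚ A (bernoulli k)) * ε ^ (n - k) =
      if n = 0 then ε else 0 := by
  have homogeneous_term : ∀ k ∈ range (n + 1),
      ((n + 1).choose k : A) * (ε ^ (k + 1) * algebraMap ℚ A (bernoulli k)) * ε ^ (n - k) =
        algebraMap ℚ A ((n + 1).choose k * bernoulli k) * ε ^ (n + 1) := fun k hk => by
    have degree : k + 1 + (n - k) = n + 1 := by grind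
    rw [← Algebra.commutes, map_mul, map_natCast, ← degree, pow_add ε (k + 1)]
    simp only [mul_assoc]
  rw [sum_congr rfl homogeneous_term, ← sum_mul, ← map_sum, sum_bernoulli]
  rcases eq_or_ne n 0 with rfl | hn <;> simp [*]

theorem log_euler_bushy_coefficients_general {A : Type*} [Ring A] [Algebra ℚ A]
    (ε : A) (η : ℕ → A) (h1 : η 1 = ε)
    (hrec : ∀ n : ℕ, 2 ≤ n →
      ∑ k ∈ Icc 1 n, (n.choose (k - 1) : A) * η k * ε ^ (n - k) = 0) :
    ∀ n : ℕ, 1 ≤ n → η n = ε ^ n * algebraMap ℚ A (bernoulli (n - 1)) := by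
  have shifted_system (n : ℕ) :
      ∑ k ∈ range (n + 1), ((n + 1).choose k : A) * η (k + 1) * ε ^ (n - k) =
        if n = 0 then ε else 0 := by
    rcases eq_or_ne n 0 with rfl | hn
    · simp [h1]
    · simpa [sum_Icc_one_eq_sum_range, hn] using hrec (n + 1) (by lia)
  have diagonal_injective (n : ℕ) :
      Function.Injective fun x : A => ((n + 1).choose n : A) * x * ε ^ (n - n) := by
    have : IsAddTorsionFree A := .of_module_rat A
    simpa only [Nat.choose_succ_self_right, Nat.sub_self, pow_zero, mul_one, nsmul_eq_mul]
      using nsmul_right_injective (M := A) n.succ_ne_zero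
  have solution : (fun k => η (k + 1)) = fun k => ε ^ (k + 1) * algebraMap ℚ A (bernoulli k) :=
    eq_of_forall_sum_range_succ_eq
      (T := fun n k x => ((n + 1).choose k : A) * x * ε ^ (n - k)) diagonal_injective
      fun n => (shifted_system n).trans (sum_choose_mul_pow_mul_bernoulli ε n).symm
  intro n hn
  obtain ⟨m, rfl⟩ := Nat.exists_eq_add_of_le' hn
  exact congrFun solution m

theorem log_euler_bushy_coefficients
    (ε : ℝ) (hε : ε ≠ 0) (η : ℕ → ℝ) (h1 : η 1 = ε)
    (hrec : ∀ n : ℕ, 2 ≤ n →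
      ∑ k ∈ Finset.Icc 1 n, (n.choose (k - 1) : ℝ) * η k * ε ^ (n - k) = 0) :
    ∀ n : ℕ, 1 ≤ n → η n = ε ^ n * (bernoulli (n - 1) : ℝ) :=
  log_euler_bushy_coefficients_general ε η h1 hrec
end

section
/- Let ε be a nonzero real number, η : ℕ → ℝ, and γ : ℝ → ℕ → ℝ. Suppose: (i) γ 0 n = 0 for all n ≥ 1; (ii) for every n ≥ 1 and every t ∈ [0,1], the function t ↦ γ t n has derivative ∑_{k=1}^{n} ((n−1) choose (k−1)) · η k · (ε·t)^(n−k) at t; (iii) γ 1 1 = ε; and (iv) γ 1 n = 0 for all n ≥ 2. Then for every n ≥ 1, η n = ε^n · B_{n−1}, where B_m denotes the m-th Bernoulli number. -/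
/-!
Integrating the evolution equation from `0` to `1` and using
`(n + 1) * choose n j / (n - j + 1) = choose (n + 1) j` gives
`∑ j ≤ n, choose (n + 1) j * ε ^ (n - j) * η (j + 1) = (n + 1) * γ 1 (n + 1)`,
whose right-hand side is `ε` for `n = 0` and `0` otherwise. This lower triangular linear system has
nonzero diagonal entries `n + 1`, so it has at most one solution; by the defining recurrence of the
Bernoulli numbers, `η (j + 1) = ε * ε ^ j * B_j` is a solution.
-/

open Finset

section BinomialRecurrence

theorem eq_of_forall_sum_range_succ_mul_eq {R : Type*} [NonUnitalNonAssocSemiring R]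
    [IsLeftCancelAdd R] {w : ℕ → ℕ → R} (hw : ∀ n, IsLeftRegular (w n n)) {a b : ℕ → R}
    (h : ∀ n, ∑ j ∈ range (n + 1), w n j * a j = ∑ j ∈ range (n + 1), w n j * b j) : a = b := by
  funext n
  induction n using Nat.strong_induction_on with
  | _ n ih =>
    have lower_terms : ∑ j ∈ range n, w n j * a j = ∑ j ∈ range n, w n j * b j :=
      sum_congr rfl fun j hj => by rw [ih j (mem_range.mp hj)]
    have hn := h n
    rw [sum_range_succ, sum_range_succ, lower_terms] at hn
    exact hw n (add_left_cancel hn)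

variable {K : Type*} [Field K] [CharZero K]

theorem succ_mul_choose_div_sub_add_one {n j : ℕ} (hj : j ≤ n) :
    ((n : K) + 1) * (n.choose j / ((n - j : ℕ) + 1)) = (n + 1).choose j := by
  have hne : ((n - j : ℕ) : K) + 1 ≠ 0 := Nat.cast_add_one_ne_zero _
  have hchoose := Nat.choose_mul_succ_eq n j
  rw [Nat.sub_add_comm hj] at hchoose
  rw [← mul_div_assoc, div_eq_iff hne, mul_comm]
  exact_mod_cast hchoose

theorem sum_choose_mul_pow_mul_pow_mul_bernoulli (x : K) (n : ℕ) :
    ∑ j ∈ range (n + 1), ((n + 1).choose j * x ^ (n - j)) * (x ^ j * (bernoulli j : K)) =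
      if n = 0 then 1 else 0 := by
  have hbernoulli : ∑ j ∈ range (n + 1), ((n + 1).choose j : K) * (bernoulli j : K) =
      if n = 0 then 1 else 0 := by
    simpa only [Rat.cast_sum, Rat.cast_mul, Rat.cast_natCast, apply_ite Rat.cast, Rat.cast_one,
      Rat.cast_zero, Nat.add_eq_right] using congrArg (Rat.cast : ℚ → K) (sum_bernoulli (n + 1))
  calc
    _ = ∑ j ∈ range (n + 1), x ^ n * ((n + 1).choose j * (bernoulli j : K)) := by
      refine sum_congr rfl fun j hj => ?_
      rw [← pow_sub_mul_pow x (mem_range_succ_iff.mp hj)]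
      ring
    _ = x ^ n * if n = 0 then 1 else 0 := by rw [← mul_sum, hbernoulli]
    _ = if n = 0 then 1 else 0 := by split_ifs with hn <;> simp [hn]

theorem eq_mul_pow_mul_bernoulli_of_sum_choose_mul_pow_mul {x c : K} {a : ℕ → K}
    (h : ∀ n, ∑ j ∈ range (n + 1), ((n + 1).choose j * x ^ (n - j)) * a j =
      if n = 0 then c else 0) (n : ℕ) :
    a n = c * (x ^ n * (bernoulli n : K)) := by
  refine congrFun (eq_of_forall_sum_range_succ_mul_eq
    (w := fun m j => (m + 1).choose j * x ^ (m - j))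
    (b := fun m => c * (x ^ m * (bernoulli m : K))) (fun m => ?_) fun m => ?_) n
  · have hne : ((m + 1).choose m * x ^ (m - m) : K) ≠ 0 := by
      simpa using Nat.cast_add_one_ne_zero m
    exact (IsRegular.of_ne_zero hne).left
  · simp only [h, mul_left_comm _ c, ← mul_sum, sum_choose_mul_pow_mul_pow_mul_bernoulli, mul_ite,
      mul_one, mul_zero]

end BinomialRecurrence

section BinomialEvolution

variable (a : ℕ → ℝ) (x T : ℝ) (n : ℕ)

theorem succ_mul_integral_sum_choose_mul_pow :
    (n + 1) * ∫ t in 0..T, ∑ j ∈ range (n + 1), n.choose j * a j * (x * t) ^ (n - j) =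
      ∑ j ∈ range (n + 1), (n + 1).choose j * x ^ (n - j) * a j * T ^ (n - j + 1) := by
  rw [intervalIntegral.integral_finsetSum
    fun j _ => Continuous.intervalIntegrable (by fun_prop) _ _, mul_sum]
  refine sum_congr rfl fun j hj => ?_
  have hintegral : ∫ t in 0..T, n.choose j * a j * (x * t) ^ (n - j) =
      n.choose j * a j * (x ^ (n - j) * (T ^ (n - j + 1) / ((n - j : ℕ) + 1))) := by
    simp [mul_pow]
  rw [hintegral, ← succ_mul_choose_div_sub_add_one (mem_range_succ_iff.mp hj)]
  ring

variable {a x T n} in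
theorem succ_mul_sub_eq_sum_of_hasDerivAt {f : ℝ → ℝ}
    (hf : ∀ t ∈ Set.uIcc 0 T,
      HasDerivAt f (∑ j ∈ range (n + 1), n.choose j * a j * (x * t) ^ (n - j)) t) :
    (n + 1) * (f T - f 0) =
      ∑ j ∈ range (n + 1), (n + 1).choose j * x ^ (n - j) * a j * T ^ (n - j + 1) := by
  rw [← succ_mul_integral_sum_choose_mul_pow, intervalIntegral.integral_eq_sub_of_hasDerivAt hf
    (Continuous.intervalIntegrable (by fun_prop) _ _)]

end BinomialEvolution

theorem exp_evolution_bushy_coefficients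
    (ε : ℝ) (hε : ε ≠ 0) (η : ℕ → ℝ) (γ : ℝ → ℕ → ℝ)
    (hinit : ∀ n : ℕ, 1 ≤ n → γ 0 n = 0)
    (hderiv : ∀ n : ℕ, 1 ≤ n → ∀ t ∈ Set.Icc (0 : ℝ) 1,
      HasDerivAt (fun t => γ t n)
        (∑ k ∈ Finset.Icc 1 n, ((n - 1).choose (k - 1) : ℝ) * η k * (ε * t) ^ (n - k)) t)
    (hone : γ 1 1 = ε)
    (hzero : ∀ n : ℕ, 2 ≤ n → γ 1 n = 0) :
    ∀ n : ℕ, 1 ≤ n → η n = ε ^ n * (bernoulli (n - 1) : ℝ) := by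
  have hderiv_succ (m : ℕ) : ∀ t ∈ Set.uIcc (0 : ℝ) 1, HasDerivAt (fun t => γ t (m + 1))
      (∑ j ∈ range (m + 1), m.choose j * η (j + 1) * (ε * t) ^ (m - j)) t := by
    intro t ht
    have h := hderiv (m + 1) m.succ_pos t (Set.uIcc_of_le (zero_le_one' ℝ) ▸ ht)
    rw [← Ico_add_one_right_eq_Icc, ← sum_Ico_add' _ 0 (m + 1) 1, ← range_eq_Ico] at h
    simpa only [Nat.add_sub_cancel, Nat.add_sub_add_right] using h
  have recurrence (m : ℕ) :
      ∑ j ∈ range (m + 1), ((m + 1).choose j * ε ^ (m - j)) * η (j + 1) =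
        if m = 0 then ε else 0 := by
    have h := succ_mul_sub_eq_sum_of_hasDerivAt (hderiv_succ m)
    simp only [one_pow, mul_one, hinit (m + 1) m.succ_pos, sub_zero] at h
    rw [← h]
    rcases m with _ | m
    · simp [hone]
    · simp [hzero (m + 2) (by omega)]
  rintro (_ | m) hn
  · contradiction
  · rw [eq_mul_pow_mul_bernoulli_of_sum_choose_mul_pow_mul (a := fun j => η (j + 1)) recurrence m,
      Nat.add_sub_cancel, pow_succ', mul_assoc]
end
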